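/- For every t > 0 and x ∈ ℝ², ∫₀ᵗ s^{−1} (∇G(t − s/2, x) − ∇G(t, x)) ds = Σ_{k=1}^∞ (t/2)^k ∇(−Δ)^kG(t, x)/(k·k!), the series converging absolutely. Consequently, for any a ∈ ℝ², ∫₀ᵗ ∫_{ℝ²} (a·∇G(t−s, x−y) − a·∇G(t, x)) G(s, y)² dy ds = (1/(8π)) Σ_{k=1}^∞ (t/2)^k a·∇(−Δ)^kG(t, x)/(k·k!). -/

import Mathlib

open MeasureTheory Real Filter Asymptotics ENNReal

noncomputable section

/-- The plane `ℝ²`, realized as a Euclidean space. -/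
abbrev E2 : Type := EuclideanSpace ℝ (Fin 2)

/-- The two-dimensional heat kernel `G(t,x) = (4πt)⁻¹ exp(-|x|²/(4t))`. -/
def G (t : ℝ) (x : E2) : ℝ := (4 * π * t)⁻¹ * Real.exp (-‖x‖ ^ 2 / (4 * t))

/-- Partial derivative `∂_j` in the `j`-th coordinate direction. -/
def pd (j : Fin 2) (f : E2 → ℝ) (x : E2) : ℝ := fderiv ℝ f x (EuclideanSpace.single j 1)

/-- The decay exponent `γ_q = 1 - 1/q` (with the convention `γ_∞ = 1`). -/
def gam (q : ℝ≥0∞) : ℝ := 1 - (q.toReal)⁻¹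

/-- The negative Laplacian `-Δ`. -/
def negLap (f : E2 → ℝ) (x : E2) : ℝ := -(pd 0 (pd 0 f) x + pd 1 (pd 1 f) x)

lemma hasSum_congr_aux {E : Type*} [AddCommMonoid E] [TopologicalSpace E] {f g : ℕ → E} {a : E}
    (h : ∀ k, f k = g k) (hg : HasSum g a) : HasSum f a := by
  rw [show f = g from funext h]
  exact hg

open Polynomial in
/-- Laguerre-type polynomials (up to normalization). -/
def lag : ℕ → ℝ[X]
  | 0 => 1
  | k + 1 => -((k + 1 : ℝ[X]) * lag k) - X * derivative (lag k) + X * lag k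

open Polynomial in
/-- The polynomial of the gradient. -/
def lagq (k : ℕ) : ℝ[X] := derivative (lag k) - lag k

open Polynomial in
lemma lag_ode (k : ℕ) : X * derivative (derivative (lag k)) + (1 - X) * derivative (lag k)
    + (k : ℝ[X]) * lag k = 0 := by
  induction k with
  | zero => simp [lag]
  | succ k ih =>
    have h1 : derivative (lag (k + 1)) = (k + 1 : ℝ[X]) * (lag k - derivative (lag k)) := by
      simp only [lag, derivative_add, derivative_sub, derivative_neg, derivative_mul, derivative_X,
        derivative_natCast, derivative_one]
      linear_combination -ih
    have h2 : derivative (derivative (lag (k + 1)))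
        = (k + 1 : ℝ[X]) * (derivative (lag k) - derivative (derivative (lag k))) := by
      rw [h1]
      simp [derivative_mul]
    rw [h2, h1]
    simp only [lag]
    push_cast
    linear_combination -(k + 1 : ℝ[X]) * ih

open Polynomial in
lemma lagq_succ (k : ℕ) : lagq (k + 1)
    = -((k + 2 : ℝ[X]) * lagq k) - X * (derivative (lagq k) - lagq k) := by
  have ih := lag_ode k
  have h1 : derivative (lag (k + 1)) = (k + 1 : ℝ[X]) * (lag k - derivative (lag k)) := by
    simp only [lag, derivative_add, derivative_sub, derivative_neg, derivative_mul, derivative_X,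
      derivative_natCast, derivative_one]
    linear_combination -ih
  simp only [lagq, h1, derivative_sub]
  simp only [lag]
  linear_combination ih

open Polynomial in
lemma lag_succ' (k : ℕ) : lag (k + 1)
    = X * (derivative (lagq k) - lagq k) + lagq k := by
  have ih := lag_ode k
  simp only [lagq, lag, derivative_sub]
  linear_combination -ih

/-- Radial profile. -/
def prof (t : ℝ) (p : Polynomial ℝ) (r : ℝ) : ℝ := p.eval (r / (4 * t)) * Real.exp (-(r / (4 * t)))

lemma prof_hasDerivAt (t : ℝ) (p : Polynomial ℝ) (r : ℝ) :
    HasDerivAt (prof t p) ((4 * t)⁻¹ * prof t (Polynomial.derivative p - p) r) r := by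
  have h0 : HasDerivAt (fun r : ℝ => r / (4 * t)) (1 / (4 * t)) r :=
    (hasDerivAt_id r).div_const _
  have h1 := (p.hasDerivAt (r / (4 * t))).comp r h0
  have h2 := h0.neg.exp
  have h3 := h1.mul h2
  refine h3.congr_deriv ?_
  simp only [prof, Function.comp, Polynomial.eval_sub, Pi.neg_apply]
  ring

lemma pd_radial (j : Fin 2) (φ : ℝ → ℝ) (φ' : ℝ) (x : E2) (h : HasDerivAt φ φ' (‖x‖ ^ 2)) :
    pd j (fun y => φ (‖y‖ ^ 2)) x = 2 * x j * φ' := by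
  have h1 := (hasStrictFDerivAt_norm_sq x).hasFDerivAt
  have h2 := h.comp_hasFDerivAt x h1
  have : pd j (fun y => φ (‖y‖ ^ 2)) x = (φ' • (2 • innerSL ℝ x)) (EuclideanSpace.single j 1) := by
    unfold pd
    rw [← h2.fderiv]; rfl
  rw [this]
  simp [EuclideanSpace.inner_single_right]
  ring

lemma pd_coord_radial (j : Fin 2) (φ : ℝ → ℝ) (φ' : ℝ) (x : E2) (h : HasDerivAt φ φ' (‖x‖ ^ 2)) :
    pd j (fun y => y j * φ (‖y‖ ^ 2)) x = φ (‖x‖ ^ 2) + x j * (2 * x j * φ') := by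
  have h1 := (hasStrictFDerivAt_norm_sq x).hasFDerivAt
  have h2 := h.comp_hasFDerivAt x h1
  have h3 : HasFDerivAt (fun y : E2 => y j) (EuclideanSpace.proj j : E2 →L[ℝ] ℝ) x :=
    (EuclideanSpace.proj j : E2 →L[ℝ] ℝ).hasFDerivAt
  have h4 := h3.mul h2
  have : pd j (fun y => y j * φ (‖y‖ ^ 2)) x = (x j • (φ' • (2 • innerSL ℝ x)) +
      φ (‖x‖ ^ 2) • (EuclideanSpace.proj j : E2 →L[ℝ] ℝ)) (EuclideanSpace.single j 1) := by
    unfold pd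
    exact congrArg (fun L : E2 →L[ℝ] ℝ => L (EuclideanSpace.single j 1)) h4.fderiv
  rw [this]
  simp [EuclideanSpace.inner_single_right]
  ring

lemma pd_prof (j : Fin 2) (t c : ℝ) (p : Polynomial ℝ) :
    pd j (fun y => c * prof t p (‖y‖ ^ 2))
      = fun x => x j * (c * 2 * (4 * t)⁻¹ * prof t (Polynomial.derivative p - p) (‖x‖ ^ 2)) := by
  ext x
  rw [pd_radial j (fun r => c * prof t p r) _ x ((prof_hasDerivAt t p _).const_mul c)]
  ring

lemma negLap_prof (t : ℝ) (ht : t ≠ 0) (c : ℝ) (k : ℕ) :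
    negLap (fun y => c * prof t (lag k) (‖y‖ ^ 2))
      = fun x => (-c * t⁻¹) * prof t (lag (k + 1)) (‖x‖ ^ 2) := by
  ext x
  unfold negLap
  rw [pd_prof, pd_prof]
  rw [pd_coord_radial 0 (fun r => c * 2 * (4 * t)⁻¹ *
      prof t (Polynomial.derivative (lag k) - lag k) r) _ x ((prof_hasDerivAt t _ _).const_mul _)]
  rw [pd_coord_radial 1 (fun r => c * 2 * (4 * t)⁻¹ *
      prof t (Polynomial.derivative (lag k) - lag k) r) _ x ((prof_hasDerivAt t _ _).const_mul _)]
  rw [lag_succ']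
  have hn : ‖x‖ ^ 2 = x 0 ^ 2 + x 1 ^ 2 := by
    rw [EuclideanSpace.norm_sq_eq]; simp
  rw [← lagq]
  simp only [prof, Polynomial.eval_add, Polynomial.eval_mul, Polynomial.eval_X, Polynomial.eval_sub]
  rw [hn]
  field_simp
  ring

lemma G_eq_prof (t : ℝ) : G t = fun y => ((4 * π)⁻¹ * t⁻¹) * prof t (lag 0) (‖y‖ ^ 2) := by
  ext y
  simp only [G, prof, lag, Polynomial.eval_one, one_mul]
  rw [mul_inv, neg_div]

lemma negLap_iter (t : ℝ) (ht : t ≠ 0) (k : ℕ) : negLap^[k] (G t) =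
    fun y => ((4 * π)⁻¹ * ((-1) ^ k * t⁻¹ ^ (k + 1))) * prof t (lag k) (‖y‖ ^ 2) := by
  induction k with
  | zero => rw [Function.iterate_zero, id, G_eq_prof]; simp
  | succ k ih =>
    rw [Function.iterate_succ_apply', ih, negLap_prof t ht]
    ext y
    ring

lemma pd_negLap_iter (j : Fin 2) (t : ℝ) (ht : t ≠ 0) (k : ℕ) (x : E2) :
    pd j (negLap^[k] (G t)) x =
      (x j * (8 * π)⁻¹) * ((-1) ^ k * (t⁻¹ ^ (k + 2) * prof t (lagq k) (‖x‖ ^ 2))) := by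
  rw [negLap_iter t ht, pd_prof, ← lagq]
  simp only [mul_inv]
  ring

/-- complex time-derivative profile -/
def hc (c : ℂ) (k : ℕ) (z : ℂ) : ℂ :=
  z⁻¹ ^ (k + 2) * (Polynomial.aeval (c * z⁻¹) (lagq k) * Complex.exp (-(c * z⁻¹)))

lemma hc_hasDerivAt (c : ℂ) (k : ℕ) (z : ℂ) (hz : z ≠ 0) :
    HasDerivAt (hc c k) (hc c (k + 1) z) z := by
  have h0 := hasDerivAt_inv hz
  have h1 := h0.const_mul c
  have h2 := ((lagq k).hasDerivAt_aeval (c * z⁻¹)).comp z h1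
  have h3 := h1.neg.cexp
  have h4 := (h0.pow (k + 2)).mul (h2.mul h3)
  refine h4.congr_deriv ?_
  simp only [hc, lagq_succ, Function.comp, map_sub, map_neg, map_mul, map_add, map_natCast,
    Polynomial.aeval_X, map_ofNat, Pi.mul_apply, Pi.pow_apply, Pi.neg_apply]
  push_cast
  rw [← inv_pow]
  ring

lemma hc_iter (c : ℂ) (k : ℕ) : ∀ z : ℂ, z ≠ 0 → iteratedDeriv k (hc c 0) z = hc c k z := by
  induction k with
  | zero => intro z _; simp
  | succ k ih =>
    intro z hz
    rw [iteratedDeriv_succ]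
    have : iteratedDeriv k (hc c 0) =ᶠ[nhds z] hc c k := by
      filter_upwards [isOpen_ne.mem_nhds hz] with w hw using ih w hw
    rw [this.deriv_eq, (hc_hasDerivAt c k z hz).deriv]

lemma hc_real (t r : ℝ) (k : ℕ) :
    hc ((r / 4 : ℝ) : ℂ) k (t : ℂ) = ((t⁻¹ ^ (k + 2) * prof t (lagq k) r : ℝ) : ℂ) := by
  have h : ((r / 4 : ℝ) : ℂ) * (t : ℂ)⁻¹ = algebraMap ℝ ℂ (r / (4 * t)) := by
    simp; ring
  unfold hc prof
  rw [h, Polynomial.aeval_algebraMap_apply]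
  simp

lemma taylor (j : Fin 2) (t : ℝ) (ht : 0 < t) (x : E2) (s : ℝ) (hs : |s| < t) :
    HasSum (fun k : ℕ => s ^ k * pd j (negLap^[k] (G t)) x / (Nat.factorial k : ℝ))
      (pd j (G (t - s)) x) := by
  have hts : t - s ≠ 0 := by have := (abs_lt.1 hs).2; linarith
  have key := @Complex.hasSum_taylorSeries_on_ball ℂ _ _ _ (hc ((‖x‖ ^ 2 / 4 : ℝ) : ℂ) 0)
    (t : ℂ) t (by
      intro z hz
      have hz0 : z ≠ 0 := by
        rintro rfl
        simp [abs_of_pos ht] at hz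
      exact (hc_hasDerivAt _ 0 z hz0).differentiableAt.differentiableWithinAt)
    (((t - s : ℝ)) : ℂ) (by
      simp
      exact hs)
  have ht0 : (t : ℂ) ≠ 0 := by exact_mod_cast ht.ne'
  simp only [hc_iter _ _ _ ht0, hc_real] at key
  have h1 : HasSum (fun k : ℕ => ((Nat.factorial k : ℝ)⁻¹ * ((-s) ^ k *
      (t⁻¹ ^ (k + 2) * prof t (lagq k) (‖x‖ ^ 2))))) ((t - s)⁻¹ ^ (0 + 2) *
        prof (t - s) (lagq 0) (‖x‖ ^ 2)) := by
    rw [← Complex.hasSum_ofReal]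
    refine hasSum_congr_aux (fun k => ?_) key
    simp
  have h2 := pd_negLap_iter j (t - s) hts 0 x
  simp only [Function.iterate_zero, id] at h2
  rw [h2]
  have h3 := h1.mul_left (x j * (8 * π)⁻¹)
  rw [pow_zero, one_mul]
  refine hasSum_congr_aux (fun k => ?_) h3
  rw [pd_negLap_iter j t ht.ne', neg_pow s]
  ring

lemma gen_expansion (t : ℝ) (ht : 0 < t) (c : ℕ → ℝ) (f : ℝ → ℝ)
    (h : ∀ s, 0 < s → s ≤ t → HasSum (fun k : ℕ => (s / 2) ^ k * c k / (Nat.factorial k : ℝ)) (f s)) :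
    Summable (fun k : ℕ =>
        |(t / 2) ^ (k + 1) * c (k + 1) / (((k + 1) * Nat.factorial (k + 1) : ℕ) : ℝ)|) ∧
      ∫ s in (0:ℝ)..t, s⁻¹ * (f s - c 0)
        = ∑' k : ℕ, (t / 2) ^ (k + 1) * c (k + 1) /
            (((k + 1) * Nat.factorial (k + 1) : ℕ) : ℝ) := by
  have hS : Summable (fun k : ℕ => |(t / 2) ^ (k + 1) * c (k + 1) / (Nat.factorial (k + 1) : ℝ)|) :=
    ((summable_nat_add_iff 1).mpr (h t ht le_rfl).summable).abs
  constructor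
  · refine Summable.of_nonneg_of_le (fun _ => abs_nonneg _) (fun k => ?_) hS
    rw [abs_div, abs_div]
    apply div_le_div_of_nonneg_left (abs_nonneg _)
    · rw [abs_pos]; positivity
    · rw [Nat.abs_cast, Nat.abs_cast]
      norm_cast
      exact Nat.le_mul_of_pos_left _ (Nat.succ_pos k)
  · have key := intervalIntegral.hasSum_integral_of_dominated_convergence (μ := volume)
      (a := 0) (b := t)
      (F := fun (k : ℕ) (s : ℝ) => s ^ k * ((1 / 2) ^ (k + 1) * c (k + 1) / (Nat.factorial (k + 1) : ℝ)))
      (f := fun s => s⁻¹ * (f s - c 0))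
      (fun k _ => t⁻¹ * |(t / 2) ^ (k + 1) * c (k + 1) / (Nat.factorial (k + 1) : ℝ)|)
      (fun k => by
        apply Continuous.aestronglyMeasurable
        fun_prop)
      (fun k => by
        refine Eventually.of_forall fun s hs => ?_
        rw [Set.uIoc_of_le ht.le] at hs
        have e : t⁻¹ * |(t / 2) ^ (k + 1) * c (k + 1) / (Nat.factorial (k + 1) : ℝ)|
          = t ^ k * |(1 / 2) ^ (k + 1) * c (k + 1) / (Nat.factorial (k + 1) : ℝ)| := by
          have : (t / 2) ^ (k + 1) * c (k + 1) / (Nat.factorial (k + 1) : ℝ)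
            = t ^ (k + 1) * ((1 / 2) ^ (k + 1) * c (k + 1) / (Nat.factorial (k + 1) : ℝ)) := by
            rw [div_eq_mul_one_div t 2, mul_pow]; ring
          rw [this, abs_mul, abs_of_pos (pow_pos ht _), pow_succ t]
          field_simp
        rw [e, norm_mul, Real.norm_eq_abs, Real.norm_eq_abs, abs_of_pos (pow_pos hs.1 _)]
        exact mul_le_mul_of_nonneg_right (pow_le_pow_left₀ hs.1.le hs.2 k) (abs_nonneg _))
      (Eventually.of_forall fun s _ => hS.mul_left _)
      (by simp)
      (Eventually.of_forall fun s hs => by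
        rw [Set.uIoc_of_le ht.le] at hs
        have h1 := (hasSum_nat_add_iff' 1).mpr (h s hs.1 hs.2)
        have h2 := h1.mul_left s⁻¹
        simp only [Finset.range_one, Finset.sum_singleton, pow_zero, one_mul, Nat.factorial_zero,
          Nat.cast_one, div_one] at h2
        refine hasSum_congr_aux (fun k => ?_) h2
        have := hs.1.ne'
        rw [div_eq_mul_one_div s 2, mul_pow, pow_succ s]
        field_simp)
    rw [← key.tsum_eq]
    refine tsum_congr fun k => ?_
    rw [intervalIntegral.integral_mul_const, integral_pow, div_eq_mul_one_div t 2, mul_pow]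
    push_cast
    field_simp
    simp

lemma pd_G (j : Fin 2) (s : ℝ) (hs : s ≠ 0) (z : E2) :
    pd j (G s) z = -(z j / (2 * s)) * G s z := by
  have h2 := pd_negLap_iter j s hs 0 z
  simp only [Function.iterate_zero, id] at h2
  rw [h2, G_eq_prof]
  simp only [lagq, lag, prof, Polynomial.derivative_one, zero_sub, Polynomial.eval_neg,
    Polynomial.eval_one, inv_pow]
  field_simp
  ring

lemma G_prod (τ σ : ℝ) (hτ : 0 < τ) (hσ : 0 < σ) (x v : E2) :
    G τ (x - (v + (σ / (τ + σ)) • x)) * G σ (v + (σ / (τ + σ)) • x)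
      = G (τ + σ) x * G (τ * σ / (τ + σ)) v := by
  have h : (0:ℝ) < τ + σ := by positivity
  simp only [G]
  rw [mul_mul_mul_comm, ← Real.exp_add, mul_mul_mul_comm, ← Real.exp_add]
  congr 1
  · field_simp
  · congr 1
    simp only [EuclideanSpace.norm_sq_eq, Fin.sum_univ_two, PiLp.sub_apply, PiLp.add_apply,
      PiLp.smul_apply, smul_eq_mul, Real.norm_eq_abs, sq_abs]
    field_simp
    ring

lemma G_eq_rexp (ρ : ℝ) : G ρ = fun v => (4 * π * ρ)⁻¹ * Real.exp (-(4 * ρ)⁻¹ * ‖v‖ ^ 2) := by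
  ext v
  simp only [G]
  congr 2
  ring

lemma integral_G (ρ : ℝ) (hρ : 0 < ρ) : ∫ v : E2, G ρ v = 1 := by
  rw [G_eq_rexp, integral_const_mul, GaussianFourier.integral_rexp_neg_mul_sq_norm (by positivity)]
  simp
  field_simp

lemma integrable_G (ρ : ℝ) (hρ : 0 < ρ) : Integrable (G ρ) :=
  Integrable.of_integral_ne_zero (by rw [integral_G ρ hρ]; norm_num)

lemma continuous_G (ρ : ℝ) : Continuous (G ρ) := by
  unfold G
  fun_prop

lemma integrable_coord_G (ρ : ℝ) (hρ : 0 < ρ) (j : Fin 2) :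
    Integrable (fun v : E2 => v j * G ρ v) := by
  refine Integrable.mono' ((integrable_G (2 * ρ) (by positivity)).const_mul (2 * (1 + 8 * ρ))) ?_ ?_
  · have := continuous_G ρ
    apply Continuous.aestronglyMeasurable
    fun_prop
  · refine Eventually.of_forall fun v => ?_
    have hG : 0 < G (2 * ρ) v := by unfold G; positivity
    have e : G ρ v = 2 * G (2 * ρ) v * Real.exp (-((8 * ρ)⁻¹ * ‖v‖ ^ 2)) := by
      simp only [G]
      rw [← mul_assoc 2, mul_assoc (2 * _), ← Real.exp_add]
      congr 1
      · field_simp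
      · congr 1
        field_simp
        ring
    have h1 : |v j| ≤ ‖v‖ := by
      have := PiLp.norm_apply_le v j
      simpa using this
    have h2 := Real.add_one_le_exp ((8 * ρ)⁻¹ * ‖v‖ ^ 2)
    have h3 : ‖v‖ ≤ (1 + 8 * ρ) * ((8 * ρ)⁻¹ * ‖v‖ ^ 2 + 1) := by
      have : (1 + 8 * ρ) * ((8 * ρ)⁻¹ * ‖v‖ ^ 2 + 1)
        = (8 * ρ)⁻¹ * ‖v‖ ^ 2 + ‖v‖ ^ 2 + 1 + 8 * ρ := by field_simp; ring
      rw [this]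
      have : 0 ≤ (8 * ρ)⁻¹ * ‖v‖ ^ 2 := by positivity
      nlinarith [sq_nonneg (‖v‖ - 1)]
    have h4 : |v j| * Real.exp (-((8 * ρ)⁻¹ * ‖v‖ ^ 2)) ≤ 1 + 8 * ρ := by
      rw [Real.exp_neg, ← div_eq_mul_inv, div_le_iff₀ (Real.exp_pos _)]
      exact (h1.trans h3).trans (mul_le_mul_of_nonneg_left h2 (by positivity))
    rw [e, Real.norm_eq_abs, abs_mul, abs_of_pos (a := 2 * G (2 * ρ) v * _) (by positivity)]
    calc _ = 2 * G (2 * ρ) v * (|v j| * Real.exp (-((8 * ρ)⁻¹ * ‖v‖ ^ 2))) := by ring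
      _ ≤ 2 * G (2 * ρ) v * (1 + 8 * ρ) := mul_le_mul_of_nonneg_left h4 (by positivity)
      _ = _ := by ring

lemma integral_coord_G (ρ : ℝ) (j : Fin 2) : ∫ v : E2, v j * G ρ v = 0 := by
  have h := integral_neg_eq_self (fun v : E2 => v j * G ρ v) volume
  have h2 : (fun v : E2 => (-v) j * G ρ (-v)) = fun v => -(v j * G ρ v) := by
    ext v
    simp [G]
  rw [h2, integral_neg] at h
  linarith

lemma conv_G (τ σ : ℝ) (hτ : 0 < τ) (hσ : 0 < σ) (j : Fin 2) (x : E2) :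
    Integrable (fun y : E2 => pd j (G τ) (x - y) * G σ y) ∧
      ∫ y : E2, pd j (G τ) (x - y) * G σ y = pd j (G (τ + σ)) x := by
  have h : (0:ℝ) < τ + σ := by positivity
  have hρ : 0 < τ * σ / (τ + σ) := by positivity
  set m : E2 := (σ / (τ + σ)) • x with hm
  have e : ∀ v : E2, pd j (G τ) (x - (v + m)) * G σ (v + m)
      = (-(x j / (2 * (τ + σ))) * G (τ + σ) x) * G (τ * σ / (τ + σ)) v
        + (G (τ + σ) x / (2 * τ)) * (v j * G (τ * σ / (τ + σ)) v) := by
    intro v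
    rw [pd_G j τ hτ.ne', mul_assoc, hm, G_prod τ σ hτ hσ]
    simp only [PiLp.sub_apply, PiLp.add_apply, PiLp.smul_apply, smul_eq_mul]
    field_simp
    ring
  have i1 := (integrable_G _ hρ).const_mul (-(x j / (2 * (τ + σ))) * G (τ + σ) x)
  have i2 := (integrable_coord_G _ hρ j).const_mul (G (τ + σ) x / (2 * τ))
  have i3 : Integrable (fun v : E2 => pd j (G τ) (x - (v + m)) * G σ (v + m)) := by
    simp only [e]
    exact i1.add i2
  constructor
  · have := i3.comp_add_right (-m)
    simpa using this
  · rw [← integral_add_right_eq_self _ m]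
    simp only [e]
    rw [integral_add i1 i2, integral_const_mul, integral_const_mul, integral_G _ hρ,
      integral_coord_G, pd_G j _ h.ne']
    ring

lemma G_sq (s : ℝ) (hs : 0 < s) (y : E2) : G s y ^ 2 = (8 * π * s)⁻¹ * G (s / 2) y := by
  simp only [G]
  rw [mul_pow, ← Real.exp_nat_mul, ← mul_assoc]
  congr 1
  · field_simp
    ring
  · congr 1
    push_cast
    field_simp

lemma inner_integral (t s : ℝ) (hs : 0 < s) (hst : s < t) (x a : E2) :
    ∫ y : E2, ((∑ j : Fin 2, a j * pd j (G (t - s)) (x - y))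
            - ∑ j : Fin 2, a j * pd j (G t) x) * (G s y) ^ 2
      = (8 * π)⁻¹ * (s⁻¹ * ((∑ j : Fin 2, a j * pd j (G (t - s / 2)) x)
          - ∑ j : Fin 2, a j * pd j (G t) x)) := by
  have c := fun j => conv_G (t - s) (s / 2) (by linarith) (by linarith) j x
  have e : ∀ y : E2, ((∑ j : Fin 2, a j * pd j (G (t - s)) (x - y))
            - ∑ j : Fin 2, a j * pd j (G t) x) * (G s y) ^ 2
      = (8 * π * s)⁻¹ * ((∑ j : Fin 2, a j * (pd j (G (t - s)) (x - y) * G (s / 2) y))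
        - (∑ j : Fin 2, a j * pd j (G t) x) * G (s / 2) y) := by
    intro y
    rw [G_sq s hs]
    simp only [Fin.sum_univ_two]
    ring
  simp only [e]
  have hi : ∀ j ∈ Finset.univ, Integrable
      (fun y : E2 => a j * (pd j (G (t - s)) (x - y) * G (s / 2) y)) :=
    fun j _ => (c j).1.const_mul _
  rw [integral_const_mul, integral_sub (integrable_finsetSum _ hi)
    ((integrable_G _ (by linarith)).const_mul _), integral_finsetSum _ hi, integral_const_mul,
    integral_G _ (by linarith)]
  simp only [integral_const_mul, (c _).2]
  rw [show t - s + s / 2 = t - s / 2 by ring, mul_one, mul_inv (8 * π), mul_assoc]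

/-- **Lemma (Taylor expansion of the shifted heat-kernel gradient).**
`∫₀ᵗ s⁻¹(∇G(t−s/2, x) − ∇G(t, x)) ds = Σ_{k≥1} (t/2)^k ∇(−Δ)^kG(t,x)/(k·k!)`
(the series converging absolutely), and consequently
`∫₀ᵗ∫ (a·∇G(t−s, x−y) − a·∇G(t,x)) G(s,y)² dy ds
  = (1/(8π)) Σ_{k≥1} (t/2)^k a·∇(−Δ)^kG(t,x)/(k·k!)`. -/
theorem shifted_gradient_expansion (t : ℝ) (ht : 0 < t) (x : E2) :
    (∀ j : Fin 2,
      Summable (fun k : ℕ =>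
        |(t / 2) ^ (k + 1) * pd j (negLap^[k + 1] (G t)) x /
          (((k + 1) * Nat.factorial (k + 1) : ℕ) : ℝ)|) ∧
      ∫ s in (0:ℝ)..t, s⁻¹ * (pd j (G (t - s / 2)) x - pd j (G t) x)
        = ∑' k : ℕ, (t / 2) ^ (k + 1) * pd j (negLap^[k + 1] (G t)) x /
            (((k + 1) * Nat.factorial (k + 1) : ℕ) : ℝ)) ∧
    (∀ a : E2,
      ∫ s in (0:ℝ)..t, ∫ y : E2,
          ((∑ j : Fin 2, a j * pd j (G (t - s)) (x - y))
            - ∑ j : Fin 2, a j * pd j (G t) x) * (G s y) ^ 2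
        = (8 * π)⁻¹ * ∑' k : ℕ, (t / 2) ^ (k + 1) *
            (∑ j : Fin 2, a j * pd j (negLap^[k + 1] (G t)) x) /
              (((k + 1) * Nat.factorial (k + 1) : ℕ) : ℝ)) := by
  have T : ∀ (j : Fin 2) (s : ℝ), 0 < s → s ≤ t → HasSum (fun k : ℕ =>
      (s / 2) ^ k * pd j (negLap^[k] (G t)) x / (Nat.factorial k : ℝ)) (pd j (G (t - s / 2)) x) := by
    intro j s hs hst
    exact taylor j t ht x (s / 2) (by rw [abs_of_pos (by linarith)]; linarith)
  refine ⟨fun j => ?_, fun a => ?_⟩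
  · exact gen_expansion t ht (fun k => pd j (negLap^[k] (G t)) x)
      (fun s => pd j (G (t - s / 2)) x) (T j)
  · have key := (gen_expansion t ht (fun k => ∑ j : Fin 2, a j * pd j (negLap^[k] (G t)) x)
      (fun s => ∑ j : Fin 2, a j * pd j (G (t - s / 2)) x) (by
        intro s hs hst
        have h1 := hasSum_sum (s := Finset.univ) (fun j _ => (T j s hs hst).mul_left (a j))
        refine hasSum_congr_aux (fun k => ?_) h1
        simp only [Fin.sum_univ_two]
        ring)).2
    rw [← key, ← intervalIntegral.integral_const_mul]
    apply intervalIntegral.integral_congr_ae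
    have hne : ∀ᵐ s : ℝ, s ≠ t := by
      simp [ae_iff, measure_singleton]
    filter_upwards [hne] with s hs hmem
    rw [Set.uIoc_of_le ht.le] at hmem
    exact inner_integral t s hmem.1 (lt_of_le_of_ne hmem.2 hs) x a
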